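/- Let p ≥ 5 be a prime, q = 2(p−1), and let m, n be integers with n ≥ m+2 > 5. Then the unique admissible monomial of total filtration 4 and total degree q(3p^{n−1} + ⋯ + 3p^{m+1} + 4p^m + ⋯ + 4p² + 3p + 3) + 1 is the multiset {a_n, h_{m+1,0}, h_{n,0}, h_{n−2,2}}. (This is the combinatorial content of the computation E₁^{4, t', *} = Z_p{a_n h_{m+1,0} h_{n,0} h_{n−2,2}} used in the proof of Lemma 3.1.) -/

import Mathlib

/-- A formal May spectral sequence generator: `a k`, `h i j`, or `b i j`. -/
inductive MayGen : Type
  | a (k : ℕ)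
  | h (i j : ℕ)
  | b (i j : ℕ)
  deriving DecidableEq

namespace MayGen

/-- Validity: the generators `h i j` and `b i j` require `i ≥ 1`. -/
def IsValid : MayGen → Prop
  | a _ => True
  | h i _ => 1 ≤ i
  | b i _ => 1 ≤ i

/-- May filtration of a generator. -/
def filt : MayGen → ℕ
  | a _ => 1
  | h _ _ => 1
  | b _ _ => 2

/-- Internal degree of a generator (at the prime `p`). -/
def deg (p : ℕ) : MayGen → ℕ
  | a k => 2 * p ^ k - 1
  | h i j => 2 * (p ^ i - 1) * p ^ j
  | b i j => 2 * (p ^ i - 1) * p ^ (j + 1)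

end MayGen

/-- Total filtration of a multiset of May generators. -/
def totalFilt (S : Multiset MayGen) : ℕ := (S.map MayGen.filt).sum

/-- Total internal degree of a multiset of May generators. -/
def totalDeg (p : ℕ) (S : Multiset MayGen) : ℕ := (S.map (MayGen.deg p)).sum

/-- An admissible monomial: each exterior generator `h i j` occurs at most once. -/
def Admissible (S : Multiset MayGen) : Prop := ∀ i j : ℕ, S.count (MayGen.h i j) ≤ 1

/-- The `j`-th digit (`j ≥ -1`) of `t` in the mixed radix `(q, p, p, …)` with
`q = 2(p-1)`:  `t = c₋₁ + q·Σ_{j≥0} c_j p^j` with `0 ≤ c₋₁ < q`, `0 ≤ c_j < p`. -/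
def mayDigit (p t : ℕ) (j : ℤ) : ℕ :=
  if j = -1 then t % (2 * (p - 1))
  else if 0 ≤ j then (t / (2 * (p - 1)) / p ^ j.toNat) % p
  else 0

namespace MayGen

/-- Lower end of the digit interval of a generator. -/
def bot : MayGen → ℕ
  | a _ => 0
  | h _ j => j
  | b _ j => j + 1

/-- Upper end (exclusive) of the digit interval of a generator. -/
def top : MayGen → ℕ
  | a k => k
  | h i j => i + j
  | b i j => i + (j + 1)

/-- Digit of a generator at position `j`. -/
def ind (j : ℕ) (g : MayGen) : ℕ := if g.bot ≤ j ∧ j < g.top then 1 else 0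

/-- One for the generators `a k`, zero otherwise. -/
def isA : MayGen → ℕ
  | a _ => 1
  | h _ _ => 0
  | b _ _ => 0

theorem bot_le_top (g : MayGen) : g.bot ≤ g.top := by
  cases g <;> simp [bot, top]

theorem geom_aux (p : ℕ) (hp : 1 ≤ p) (s t : ℕ) (hst : s ≤ t) (N : ℕ) :
    (p - 1) * ∑ j ∈ Finset.range N, (if s ≤ j ∧ j < t then 1 else 0) * p ^ j + p ^ (min s N)
      = p ^ (min t N) := by
  obtain ⟨r, rfl⟩ : ∃ r, p = r + 1 := ⟨p - 1, by omega⟩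
  simp only [Nat.add_sub_cancel]
  induction N with
  | zero => simp
  | succ N ih =>
    rw [Finset.sum_range_succ, mul_add]
    by_cases h1 : s ≤ N
    · by_cases h2 : N < t
      · rw [if_pos ⟨h1, h2⟩]
        rw [min_eq_left h1, min_eq_right h2.le] at ih
        rw [min_eq_left (by omega), min_eq_right (by omega), pow_succ]
        linarith
      · rw [if_neg (by omega)]
        rw [min_eq_left h1, min_eq_left (by omega)] at ih
        rw [min_eq_left (by omega), min_eq_left (by omega)]
        linarith
    · rw [if_neg (by omega)]
      rw [min_eq_right (by omega), min_eq_right (by omega)] at ih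
      rw [min_eq_right (by omega), min_eq_right (by omega)]
      have : r * ∑ j ∈ Finset.range N, (if s ≤ j ∧ j < t then 1 else 0) * (r + 1) ^ j = 0 := by
        omega
      rw [this]; simp

theorem deg_eq (p : ℕ) (hp : 1 ≤ p) (g : MayGen) (N : ℕ) (hN : g.top ≤ N) :
    g.deg p = 2 * (p - 1) * ∑ j ∈ Finset.range N, ind j g * p ^ j + isA g := by
  have h := geom_aux p hp g.bot g.top g.bot_le_top N
  rw [min_eq_left hN, min_eq_left (g.bot_le_top.trans hN)] at h
  have e : (p - 1) * ∑ j ∈ Finset.range N, ind j g * p ^ j = p ^ g.top - p ^ g.bot := by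
    unfold ind; omega
  rw [mul_assoc, e]
  cases g with
  | a k =>
    have : 1 ≤ p ^ k := Nat.one_le_pow _ _ hp
    simp only [deg, top, bot, isA, pow_zero]; omega
  | h i j => simp only [deg, top, bot, isA, pow_add, mul_assoc, Nat.sub_mul]; simp
  | b i j => simp only [deg, top, bot, isA, pow_add, mul_assoc, Nat.sub_mul]; simp

theorem totalDeg_eq (p : ℕ) (hp : 1 ≤ p) (N : ℕ) (S : Multiset MayGen)
    (hN : ∀ g ∈ S, g.top ≤ N) :
    totalDeg p S = 2 * (p - 1) * ∑ j ∈ Finset.range N, (S.map (ind j)).sum * p ^ j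
      + (S.map isA).sum := by
  unfold totalDeg
  induction S using Multiset.induction with
  | empty => simp
  | cons g S ih =>
    have h1 := ih (fun x hx => hN x (Multiset.mem_cons_of_mem hx))
    have h2 := deg_eq p hp g N (hN g (Multiset.mem_cons_self _ _))
    simp only [Multiset.map_cons, Multiset.sum_cons, add_mul, Finset.sum_add_distrib]
    rw [h1, h2]; ring

theorem sums_le (S : Multiset MayGen) :
    (∀ j, (S.map (ind j)).sum ≤ S.card) ∧ (S.map isA).sum ≤ S.card ∧ S.card ≤ totalFilt S := by
  unfold totalFilt
  induction S using Multiset.induction with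
  | empty => simp
  | cons g S ih =>
    obtain ⟨h1, h2, h3⟩ := ih
    simp only [Multiset.map_cons, Multiset.sum_cons, Multiset.card_cons]
    refine ⟨fun j => ?_, ?_, ?_⟩
    · have := h1 j
      have : ind j g ≤ 1 := by unfold ind; split_ifs <;> omega
      omega
    · cases g <;> simp only [isA] <;> omega
    · cases g <;> simp only [filt] <;> omega

theorem digits_unique (p : ℕ) (N : ℕ) : ∀ (f g : ℕ → ℕ), (∀ j, f j < p) → (∀ j, g j < p) →
    ∑ j ∈ Finset.range N, f j * p ^ j = ∑ j ∈ Finset.range N, g j * p ^ j →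
    ∀ j < N, f j = g j := by
  induction N with
  | zero => intro f g _ _ _ j hj; omega
  | succ N ih =>
    intro f g hf hg h
    have key : ∀ f : ℕ → ℕ, ∑ j ∈ Finset.range (N + 1), f j * p ^ j
        = p * ∑ j ∈ Finset.range N, f (j + 1) * p ^ j + f 0 := by
      intro f
      rw [Finset.sum_range_succ', Finset.mul_sum]
      simp only [pow_zero, mul_one, pow_succ]
      congr 1
      exact Finset.sum_congr rfl fun _ _ => by ring
    rw [key, key] at h
    have hp : 0 < p := (Nat.zero_le _).trans_lt (hf 0)
    have h0 : f 0 = g 0 := by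
      have := congrArg (· % p) h
      simpa [Nat.mul_add_mod, Nat.mod_eq_of_lt, hf 0, hg 0] using this
    rw [h0] at h
    have h' := Nat.eq_of_mul_eq_mul_left hp (Nat.add_right_cancel h)
    intro j hj
    cases j with
    | zero => exact h0
    | succ j => exact ih (fun j => f (j + 1)) (fun j => g (j + 1)) (fun _ => hf _) (fun _ => hg _)
                  h' j (by omega)

/-- Digits of the target degree. -/
def tgt (m n j : ℕ) : ℕ := if j < 2 then 3 else if j ≤ m then 4 else if j < n then 3 else 0

theorem tgt_sum (p m n N : ℕ) (hmn : m + 2 ≤ n) (hm : 5 < m + 2) (hN : n ≤ N) :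
    3 * ∑ j ∈ Finset.Icc (m + 1) (n - 1), p ^ j + 4 * ∑ j ∈ Finset.Icc 2 m, p ^ j + 3 * p + 3
      = ∑ j ∈ Finset.range N, tgt m n j * p ^ j := by
  have e1 : Finset.Icc (m + 1) (n - 1)
      = (Finset.range N).filter (fun j => m + 1 ≤ j ∧ j ≤ n - 1) := by
    ext j; simp only [Finset.mem_Icc, Finset.mem_filter, Finset.mem_range]; omega
  have e2 : Finset.Icc 2 m = (Finset.range N).filter (fun j => 2 ≤ j ∧ j ≤ m) := by
    ext j; simp only [Finset.mem_Icc, Finset.mem_filter, Finset.mem_range]; omega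
  have e3 : 3 * p = ∑ j ∈ Finset.range N, if j = 1 then 3 * p ^ j else 0 := by
    rw [Finset.sum_ite_eq' (Finset.range N) 1, if_pos (Finset.mem_range.2 (by omega)), pow_one]
  have e4 : 3 = ∑ j ∈ Finset.range N, if j = 0 then 3 * p ^ j else 0 := by
    rw [Finset.sum_ite_eq' (Finset.range N) 0, if_pos (Finset.mem_range.2 (by omega)), pow_zero, mul_one]
  have e5 : ∀ A B C : ℕ, C = ∑ j ∈ Finset.range N, (if j = 0 then 3 * p ^ j else 0) →
      3 * A + 4 * B + 3 * p + C
      = 3 * A + 4 * B + (∑ j ∈ Finset.range N, if j = 1 then 3 * p ^ j else 0)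
        + ∑ j ∈ Finset.range N, (if j = 0 then 3 * p ^ j else 0) := by
    intro A B C hC; rw [← e3, ← hC]
  rw [e5 _ _ 3 e4, e1, e2, Finset.sum_filter, Finset.sum_filter, Finset.mul_sum, Finset.mul_sum,
    ← Finset.sum_add_distrib, ← Finset.sum_add_distrib, ← Finset.sum_add_distrib]
  refine Finset.sum_congr rfl fun j _ => ?_
  unfold tgt
  generalize p ^ j = x
  split_ifs <;> omega

theorem ind_spec (j : ℕ) (g : MayGen) :
    (g.bot ≤ j ∧ j < g.top ∧ ind j g = 1) ∨ ((j < g.bot ∨ g.top ≤ j) ∧ ind j g = 0) := by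
  unfold ind; split_ifs <;> omega

set_option maxHeartbeats 1000000 in
theorem arith (m n k i₁ j₁ i₂ j₂ i₃ j₃ : ℕ) (hmn : m + 2 ≤ n) (hm : 5 < m + 2)
    (n12 : ¬ (i₁ = i₂ ∧ j₁ = j₂)) (n13 : ¬ (i₁ = i₃ ∧ j₁ = j₃)) (n23 : ¬ (i₂ = i₃ ∧ j₂ = j₃))
    (hd : ∀ j ≤ n, ind j (a k) + (ind j (h i₁ j₁) + (ind j (h i₂ j₂) + ind j (h i₃ j₃)))
      = tgt m n j) :
    k = n ∧ ∃ x y z : ℕ × ℕ, ((i₁, j₁) = x ∧ (i₂, j₂) = y ∧ (i₃, j₃) = z) ∧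
      ((x = (m + 1, 0) ∧ y = (n, 0) ∧ z = (n - 2, 2)) ∨
       (x = (m + 1, 0) ∧ z = (n, 0) ∧ y = (n - 2, 2)) ∨
       (y = (m + 1, 0) ∧ x = (n, 0) ∧ z = (n - 2, 2)) ∨
       (y = (m + 1, 0) ∧ z = (n, 0) ∧ x = (n - 2, 2)) ∨
       (z = (m + 1, 0) ∧ x = (n, 0) ∧ y = (n - 2, 2)) ∨
       (z = (m + 1, 0) ∧ y = (n, 0) ∧ x = (n - 2, 2))) := by
  have t0 : tgt m n 0 = 3 := rfl
  have t1 : tgt m n 1 = 3 := rfl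
  have t2 : tgt m n 2 = 4 := by unfold tgt; split_ifs <;> omega
  have tm : tgt m n m = 4 := by unfold tgt; split_ifs <;> omega
  have tm1 : tgt m n (m + 1) = 3 := by unfold tgt; split_ifs <;> omega
  have tn1 : tgt m n (n - 1) = 3 := by unfold tgt; split_ifs <;> omega
  have tn : tgt m n n = 0 := by unfold tgt; split_ifs <;> omega
  have h0 := (hd 0 (by omega)).trans t0
  have h1 := (hd 1 (by omega)).trans t1
  have h2 := (hd 2 (by omega)).trans t2
  have hhm := (hd m (by omega)).trans tm
  have hm1 := (hd (m + 1) (by omega)).trans tm1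
  have hn1 := (hd (n - 1) (by omega)).trans tn1
  have hn := (hd n (by omega)).trans tn
  clear hd t0 t1 t2 tm tm1 tn1 tn
  have q2 : j₁ ≤ 2 ∧ j₂ ≤ 2 ∧ j₃ ≤ 2 := by
    have := ind_spec 2 (a k)
    have := ind_spec 2 (h i₁ j₁)
    have := ind_spec 2 (h i₂ j₂)
    have := ind_spec 2 (h i₃ j₃)
    clear n12 n13 n23 h0 h1 hhm hm1 hn1 hn
    simp only [bot, top] at *
    omega
  have qm : m + 1 ≤ k ∧ m + 1 ≤ i₁ + j₁ ∧ m + 1 ≤ i₂ + j₂ ∧ m + 1 ≤ i₃ + j₃ := by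
    have := ind_spec m (a k)
    have := ind_spec m (h i₁ j₁)
    have := ind_spec m (h i₂ j₂)
    have := ind_spec m (h i₃ j₃)
    clear n12 n13 n23 h0 h1 h2 hm1 hn1 hn
    simp only [bot, top] at *
    omega
  have qn : k ≤ n ∧ i₁ + j₁ ≤ n ∧ i₂ + j₂ ≤ n ∧ i₃ + j₃ ≤ n := by
    have := ind_spec n (a k)
    have := ind_spec n (h i₁ j₁)
    have := ind_spec n (h i₂ j₂)
    have := ind_spec n (h i₃ j₃)
    clear n12 n13 n23 h0 h1 h2 hm1 hn1 hhm
    simp only [bot, top] at *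
    omega
  have d0 : (j₁ = 2 ∧ j₂ = 0 ∧ j₃ = 0) ∨ (j₁ = 0 ∧ j₂ = 2 ∧ j₃ = 0) ∨
      (j₁ = 0 ∧ j₂ = 0 ∧ j₃ = 2) := by
    clear n12 n13 n23 hm1 hn1 hn h2 hhm
    have u0 := ind_spec 0 (a k)
    have u1 := ind_spec 0 (h i₁ j₁)
    have u2 := ind_spec 0 (h i₂ j₂)
    have u3 := ind_spec 0 (h i₃ j₃)
    have v0 := ind_spec 1 (a k)
    have v1 := ind_spec 1 (h i₁ j₁)
    have v2 := ind_spec 1 (h i₂ j₂)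
    have v3 := ind_spec 1 (h i₃ j₃)
    simp only [bot, top] at u0 u1 u2 u3 v0 v1 v2 v3
    have w0 : ind 0 (a k) = 1 := by omega
    have w1 : ind 1 (a k) = 1 := by omega
    obtain ⟨r1, r2, r3⟩ := q2
    interval_cases j₁ <;> interval_cases j₂ <;> interval_cases j₃ <;> omega
  have d1 : (k = m + 1 ∧ i₁ + j₁ = n ∧ i₂ + j₂ = n ∧ i₃ + j₃ = n) ∨
      (k = n ∧ i₁ + j₁ = m + 1 ∧ i₂ + j₂ = n ∧ i₃ + j₃ = n) ∨
      (k = n ∧ i₁ + j₁ = n ∧ i₂ + j₂ = m + 1 ∧ i₃ + j₃ = n) ∨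
      (k = n ∧ i₁ + j₁ = n ∧ i₂ + j₂ = n ∧ i₃ + j₃ = m + 1) := by
    clear n12 n13 n23 h0 h1 hn h2 hhm d0
    have u0 := ind_spec (m + 1) (a k)
    have u1 := ind_spec (m + 1) (h i₁ j₁)
    have u2 := ind_spec (m + 1) (h i₂ j₂)
    have u3 := ind_spec (m + 1) (h i₃ j₃)
    have v0 := ind_spec (n - 1) (a k)
    have v1 := ind_spec (n - 1) (h i₁ j₁)
    have v2 := ind_spec (n - 1) (h i₂ j₂)
    have v3 := ind_spec (n - 1) (h i₃ j₃)
    simp only [bot, top] at u0 u1 u2 u3 v0 v1 v2 v3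
    rcases u0 with u0 | u0 <;> rcases u1 with u1 | u1 <;> rcases u2 with u2 | u2 <;>
      rcases u3 with u3 | u3 <;> first | (exfalso; omega) | omega
  clear h0 h1 h2 hhm hm1 hn1 hn q2 qm qn
  rcases d0 with ⟨rfl, rfl, rfl⟩ | ⟨rfl, rfl, rfl⟩ | ⟨rfl, rfl, rfl⟩ <;>
  rcases d1 with ⟨e0, e1, e2, e3⟩ | ⟨e0, e1, e2, e3⟩ | ⟨e0, e1, e2, e3⟩ | ⟨e0, e1, e2, e3⟩ <;>
  first
  | (exfalso; omega)
  | (refine ⟨e0, _, _, _, ⟨rfl, rfl, rfl⟩, ?_⟩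
     simp only [Prod.mk.injEq, and_true, and_false, false_or, or_false, true_and, false_and,
       OfNat.ofNat_ne_zero, OfNat.zero_ne_ofNat]
     omega)

theorem split_a (S : Multiset MayGen) (h : (S.map isA).sum = 1) :
    ∃ k T, S = a k ::ₘ T ∧ (T.map isA).sum = 0 := by
  have : ∃ k, a k ∈ S := by
    by_contra hc
    push Not at hc
    have : (S.map isA).sum = 0 := by
      rw [Multiset.sum_eq_zero_iff]
      intro x hx
      obtain ⟨g, hg, rfl⟩ := Multiset.mem_map.1 hx
      cases g with
      | a k => exact absurd hg (hc k)
      | h i j => rfl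
      | b i j => rfl
    omega
  obtain ⟨k, hk⟩ := this
  obtain ⟨T, rfl⟩ := Multiset.exists_cons_of_mem hk
  refine ⟨k, T, rfl, ?_⟩
  simp only [Multiset.map_cons, Multiset.sum_cons, isA] at h
  omega

theorem only_h (T : Multiset MayGen) (hA : (T.map isA).sum = 0) (hF : totalFilt T ≤ T.card) :
    ∀ g ∈ T, ∃ i j, g = h i j := by
  intro g hg
  obtain ⟨U, rfl⟩ := Multiset.exists_cons_of_mem hg
  have := (sums_le U).2.2
  unfold totalFilt at *
  simp only [Multiset.map_cons, Multiset.sum_cons, Multiset.card_cons] at hA hF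
  cases g with
  | a k => simp [isA] at hA
  | h i j => exact ⟨i, j, rfl⟩
  | b i j => simp only [filt] at hF; omega

end MayGen

open MayGen in
theorem stmt12 (p : ℕ) (hp : p.Prime) (hp5 : 5 ≤ p) (m n : ℕ)
    (hmn : m + 2 ≤ n) (hm : 5 < m + 2) (S : Multiset MayGen) :
    ((∀ x ∈ S, x.IsValid) ∧ Admissible S ∧ totalFilt S = 4 ∧
        totalDeg p S =
          2 * (p - 1) * (3 * ∑ j ∈ Finset.Icc (m + 1) (n - 1), p ^ j +
            4 * ∑ j ∈ Finset.Icc 2 m, p ^ j + 3 * p + 3) + 1) ↔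
      S = {MayGen.a n, MayGen.h (m + 1) 0, MayGen.h n 0, MayGen.h (n - 2) 2} := by
  constructor
  · rintro ⟨-, hadm, hfilt, hdeg⟩
    obtain ⟨N, hnN, hN⟩ : ∃ N, n + 1 ≤ N ∧ ∀ g ∈ S, g.top ≤ N :=
      ⟨n + 1 + (S.map MayGen.top).sum, by omega, fun g hg =>
        (Multiset.le_sum_of_mem (Multiset.mem_map_of_mem _ hg)).trans (by omega)⟩
    rw [totalDeg_eq p (by omega) N S hN, tgt_sum p m n N hmn hm (by omega)] at hdeg
    obtain ⟨hi, ha, hc⟩ := sums_le S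
    have hA : (S.map isA).sum = 1 := by
      have := congrArg (· % (2 * (p - 1))) hdeg
      simp only [Nat.mul_add_mod] at this
      rwa [Nat.mod_eq_of_lt (by omega), Nat.mod_eq_of_lt (by omega)] at this
    rw [hA] at hdeg
    have hdeg' := Nat.eq_of_mul_eq_mul_left (by omega) (Nat.add_right_cancel hdeg)
    have hd := digits_unique p N (fun j => (S.map (ind j)).sum) (tgt m n)
      (fun j => by have := hi j; show (S.map (ind j)).sum < p; omega)
      (fun j => by unfold tgt; split_ifs <;> omega) hdeg'
    have hcard : S.card = 4 := by
      have h2 := hd 2 (by omega)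
      have := hi 2
      simp only [tgt] at h2
      rw [if_neg (by omega), if_pos (by omega)] at h2
      omega
    obtain ⟨k, T, rfl, hT⟩ := split_a S hA
    have hTc : T.card = 3 := by simpa using hcard
    have hTf : totalFilt T = 3 := by
      simp only [totalFilt, Multiset.map_cons, Multiset.sum_cons, filt] at hfilt ⊢; omega
    have hh := only_h T hT (by omega)
    obtain ⟨x, y, z, rfl⟩ := Multiset.card_eq_three.1 hTc
    obtain ⟨i₁, j₁, rfl⟩ := hh x (by simp)
    obtain ⟨i₂, j₂, rfl⟩ := hh y (by simp)
    obtain ⟨i₃, j₃, rfl⟩ := hh z (by simp)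
    have n12 : ¬ (i₁ = i₂ ∧ j₁ = j₂) := by
      rintro ⟨rfl, rfl⟩
      have := hadm i₁ j₁
      simp [Multiset.count_cons] at this
    have n13 : ¬ (i₁ = i₃ ∧ j₁ = j₃) := by
      rintro ⟨rfl, rfl⟩
      have := hadm i₁ j₁
      simp [Multiset.count_cons, Multiset.count_singleton] at this
    have n23 : ¬ (i₂ = i₃ ∧ j₂ = j₃) := by
      rintro ⟨rfl, rfl⟩
      have := hadm i₂ j₂
      simp [Multiset.count_cons, Multiset.count_singleton] at this
      omega
    obtain ⟨rfl, x, y, z, ⟨h1, h2, h3⟩, hor⟩ :=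
      arith m n k i₁ j₁ i₂ j₂ i₃ j₃ hmn hm n12 n13 n23 (fun j hj => by
        have := hd j (by omega)
        simpa only [Multiset.insert_eq_cons, Multiset.map_cons, Multiset.sum_cons,
          Multiset.map_singleton, Multiset.sum_singleton] using this)
    simp only [Multiset.insert_eq_cons, ← Multiset.singleton_add]
    clear hd hdeg hdeg' hadm hi hN hfilt n12 n13 n23 hh
    rcases hor with ⟨e1, e2, e3⟩ | ⟨e1, e2, e3⟩ | ⟨e1, e2, e3⟩ | ⟨e1, e2, e3⟩ | ⟨e1, e2, e3⟩ |
      ⟨e1, e2, e3⟩ <;>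
      (subst h1 h2 h3
       simp only [Prod.mk.injEq] at e1 e2 e3
       rw [e1.1, e1.2, e2.1, e2.2, e3.1, e3.2]; try ac_rfl)
  · rintro rfl
    refine ⟨?_, ?_, ?_, ?_⟩
    · intro x hx
      simp only [Multiset.insert_eq_cons, Multiset.mem_cons, Multiset.mem_singleton] at hx
      rcases hx with rfl | rfl | rfl | rfl <;> simp only [IsValid] <;> omega
    · intro i j
      refine Multiset.nodup_iff_count_le_one.1 ?_ _
      simp
      omega
    · simp [totalFilt, filt]
    · rw [totalDeg_eq p (by omega) n, tgt_sum p m n n hmn hm le_rfl]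
      · congr 2
        refine Finset.sum_congr rfl fun j hj => ?_
        have := Finset.mem_range.1 hj
        congr 1
        simp only [Multiset.insert_eq_cons, Multiset.map_cons, Multiset.sum_cons,
          Multiset.map_singleton, Multiset.sum_singleton]
        have u0 := ind_spec j (MayGen.a n)
        have u1 := ind_spec j (MayGen.h (m + 1) 0)
        have u2 := ind_spec j (MayGen.h n 0)
        have u3 := ind_spec j (MayGen.h (n - 2) 2)
        simp only [MayGen.bot, MayGen.top] at u0 u1 u2 u3
        unfold tgt
        split_ifs <;> omega
      · intro x hx
        simp only [Multiset.insert_eq_cons, Multiset.mem_cons, Multiset.mem_singleton] at hx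
        rcases hx with rfl | rfl | rfl | rfl <;> simp only [MayGen.top] <;> omega
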